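/- arXiv:1407.7638 — 7 statements merged into one kernel-verified Lean document; each statement's English description precedes it below -/
import Mathlib

section
/- Let A be a commutative ℚ-algebra and D : A → A a derivation. For all ν, μ ∈ ℕ the product of the ideals m_ν(A) and m_μ(A) of the subring ker D is contained in m_{ν+μ}(A): every sum of products (D^ν a)(D^μ b) with a ∈ ker D^{ν+1} and b ∈ ker D^{μ+1}, multiplied by arbitrary elements of ker D, lies in m_{ν+μ}(A) = D^{ν+μ}(ker D^{ν+μ+1}). -/
/-!
If `D^{ν+1} a = 0` and `D^{μ+1} b = 0`, then in the Leibniz expansion of `D^{ν+μ}(ab)` only one term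
survives, giving `D^{ν+μ}(ab) = C(ν+μ, ν) · D^ν a · D^μ b` (`iterate_mul_top`), which is killed by
`D`. The binomial coefficient is invertible over `ℚ`, so `e · D^ν a · D^μ b` with `D e = 0` is
the `D^{ν+μ}`-image of `C(ν+μ, ν)⁻¹ · e a b`. Since `m_{ν+μ}(A)` is an additive subgroup, this
suffices.
-/

theorem iterate_const_mul {A : Type*} [CommRing A] [Algebra ℚ A] (D : Derivation ℚ A A)
    {e : A} (he : D e = 0) (k : ℕ) (x : A) : (⇑D)^[k] (e * x) = e * (⇑D)^[k] x := by
  induction k with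
  | zero => rfl
  | succ k ih => simp [Function.iterate_succ_apply', ih, he]

/-- The top-degree Leibniz formula. Induction on the two orders applies `D` once to `ab`, lowering
the order of one factor at a time; the coefficients add up by Pascal's rule. -/
theorem iterate_mul_top {A : Type*} [CommRing A] [Algebra ℚ A] (D : Derivation ℚ A A)
    (ν μ : ℕ) (a b : A) (ha : (⇑D)^[ν + 1] a = 0) (hb : (⇑D)^[μ + 1] b = 0) :
    (⇑D)^[ν + μ] (a * b) = ((ν + μ).choose ν : A) * ((⇑D)^[ν] a * (⇑D)^[μ] b) := by
  induction ν generalizing μ a b with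
  | zero =>
    have h := iterate_const_mul D (e := a) (by simpa using ha) μ b
    simpa using h
  | succ ν ihν =>
    induction μ generalizing a b with
    | zero =>
      have h := iterate_const_mul D (e := b) (by simpa using hb) (ν + 1) a
      rw [mul_comm a b]
      simp only [add_zero, Nat.choose_self, Nat.cast_one, one_mul, h]
      exact mul_comm _ _
    | succ μ ihμ =>
      have h1 := ihν (μ + 1) (D a) b ha hb
      have h2 := ihμ a (D b) ha hb
      have e0 : ν + 1 + (μ + 1) = (ν + 1 + μ) + 1 := by ring
      have e1 : ν + (μ + 1) = ν + 1 + μ := by ring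
      rw [e1] at h1
      rw [e0, Function.iterate_succ_apply, D.leibniz, iterate_map_add, smul_eq_mul, smul_eq_mul,
        mul_comm b, h1, h2, Nat.choose_succ_succ]
      simp only [Function.iterate_succ_apply, Nat.cast_add]
      ring

/-- For a commutative ℚ-algebra `A` with a derivation `D : A → A`, the product of
the ideals `m_ν(A)` and `m_μ(A)` of the subring `ker D` is contained in `m_{ν+μ}(A)`: every sum
of products `(D^ν a)(D^μ b)` with `a ∈ ker D^{ν+1}`, `b ∈ ker D^{μ+1}`, multiplied by arbitrary
elements of `ker D`, lies in `m_{ν+μ}(A) = D^{ν+μ}(ker D^{ν+μ+1})`. -/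
theorem stmt2 {A : Type*} [CommRing A] [Algebra ℚ A] (D : Derivation ℚ A A) (ν μ : ℕ) :
    ∀ s ∈ AddSubgroup.closure {s : A | ∃ e a b : A, D e = 0 ∧
        (⇑D)^[ν + 1] a = 0 ∧ (⇑D)^[μ + 1] b = 0 ∧ s = e * (⇑D)^[ν] a * (⇑D)^[μ] b},
      ∃ c : A, (⇑D)^[(ν + μ) + 1] c = 0 ∧ (⇑D)^[ν + μ] c = s := by
  intro s hs
  induction hs using AddSubgroup.closure_induction with
  | mem s hs =>
    obtain ⟨e, a, b, he, ha, hb, rfl⟩ := hs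
    have hea : (⇑D)^[ν + 1] (e * a) = 0 := by rw [iterate_const_mul D he, ha, mul_zero]
    have hC : ((ν + μ).choose ν : ℚ) ≠ 0 :=
      Nat.cast_ne_zero.mpr (Nat.choose_pos (Nat.le_add_right ν μ)).ne'
    have key : (⇑D)^[ν + μ] (algebraMap ℚ A ((ν + μ).choose ν : ℚ)⁻¹ * (e * a * b))
        = e * (⇑D)^[ν] a * (⇑D)^[μ] b := by
      rw [iterate_const_mul D (D.map_algebraMap _), iterate_mul_top D ν μ _ _ hea hb,
        iterate_const_mul D he, ← map_natCast (algebraMap ℚ A), ← mul_assoc, ← map_mul,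
        inv_mul_cancel₀ hC, map_one, one_mul]
    refine ⟨_, ?_, key⟩
    rw [Function.iterate_succ_apply', key]
    rw [Function.iterate_succ_apply'] at ha hb
    simp [ha, hb, he]
  | zero => exact ⟨0, iterate_map_zero D _, iterate_map_zero D _⟩
  | add x y _ _ hx hy =>
    obtain ⟨c, hc, rfl⟩ := hx
    obtain ⟨d, hd, rfl⟩ := hy
    exact ⟨c + d, by rw [iterate_map_add, hc, hd, add_zero], iterate_map_add D _ _ _⟩
  | neg x _ hx =>
    obtain ⟨c, hc, rfl⟩ := hx
    exact ⟨-c, by rw [iterate_map_neg, hc, neg_zero], iterate_map_neg D _ _⟩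
end

section
/- Let A be a commutative ring and D : A → A a derivation. If a, b ∈ A satisfy D^{ν+1} a = 0 and D^{μ+1} b = 0, then D^{ν+μ}(a·b) = C(ν+μ, ν) · D^ν(a) · D^μ(b), where C(ν+μ, ν) is the binomial coefficient (regarded in A via the natural number cast). (This is the computation underlying the isomorphism gr_D(A) ≅ ⊕_ν m_ν(A) t^ν, sending the class of a in degree ν to (D^ν a / ν!) t^ν.) -/
/-! Since `D^(n+1) (a * b) = D^n (D a * b) + D^n (a * D b)`, and applying `D` to `a` (resp. `b`)
lowers `ν` (resp. `μ`) by one, a double induction on `ν` and `μ` reduces the formula to Pascal's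
rule. When `ν = 0` or `μ = 0` the corresponding summand vanishes because `D a = 0` or `D b = 0`. -/

theorem iterate_succ_mul {A : Type*} [CommRing A] (D : Derivation ℤ A A) (n : ℕ) (a b : A) :
    (⇑D)^[n + 1] (a * b) = (⇑D)^[n] (D a * b) + (⇑D)^[n] (a * D b) := by
  rw [Function.iterate_succ_apply, D.leibniz, smul_eq_mul, smul_eq_mul, mul_comm b, add_comm,
    iterate_map_add]

/-- For a commutative ring `A` with a derivation `D : A → A`, if `D^{ν+1} a = 0`
and `D^{μ+1} b = 0`, then `D^{ν+μ}(a·b) = C(ν+μ, ν) · D^ν(a) · D^μ(b)`. -/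
theorem stmt3 {A : Type*} [CommRing A] (D : Derivation ℤ A A) (ν μ : ℕ) (a b : A)
    (ha : (⇑D)^[ν + 1] a = 0) (hb : (⇑D)^[μ + 1] b = 0) :
    (⇑D)^[ν + μ] (a * b) = ((ν + μ).choose ν : A) * (⇑D)^[ν] a * (⇑D)^[μ] b := by
  induction ν generalizing a b μ with
  | zero =>
    have hDa : D a = 0 := ha
    induction μ generalizing b with
    | zero => simp
    | succ μ ihμ =>
      have h := ihμ (D b) hb
      rw [← add_assoc, iterate_succ_mul, h, hDa, zero_mul, iterate_map_zero]
      simp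
  | succ ν ihν =>
    induction μ generalizing b with
    | zero =>
      have hDb : D b = 0 := hb
      have h := ihν 0 (D a) b ha hb
      rw [add_zero] at h ⊢
      rw [iterate_succ_mul, h, hDb, mul_zero, iterate_map_zero]
      simp
    | succ μ ihμ =>
      have h₁ := ihν (μ + 1) (D a) b ha hb
      have h₂ := ihμ (D b) hb
      rw [← add_assoc, iterate_succ_mul, Nat.choose_succ_succ]
      rw [show ν + (μ + 1) = ν + 1 + μ by omega] at h₁
      rw [h₁, h₂, ← Function.iterate_succ_apply, ← Function.iterate_succ_apply]
      push_cast
      ring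
end

section
/- Let A be a commutative ring, D : A → A a locally nilpotent derivation, and B ⊆ B̃ ⊆ A subrings with D(B) ⊆ B and D(B̃) ⊆ B̃. If for every ν ∈ ℕ one has D^ν(B̃ ∩ ker D^{ν+1}) ⊆ D^ν(B ∩ ker D^{ν+1}), then B = B̃. (In other words, a D-stable subring between B and A is determined by its associated graded algebra: B = B̃ if and only if gr_D(B) = gr_D(B̃).) -/
/-- Let `A` be a commutative ring, `D : A → A` a locally nilpotent derivation,
and `B ⊆ B̃ ⊆ A` `D`-stable subrings. If `m_ν(B̃) = D^ν(B̃ ∩ ker D^{ν+1})` is contained in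
`m_ν(B) = D^ν(B ∩ ker D^{ν+1})` for every `ν`, then `B = B̃`. -/
theorem stmt4 {A : Type*} [CommRing A] (D : Derivation ℤ A A)
    (hln : ∀ a : A, ∃ k : ℕ, (⇑D)^[k] a = 0)
    (B B' : Subring A) (hBB' : B ≤ B')
    (hB : ∀ b ∈ B, D b ∈ B) (hB' : ∀ b ∈ B', D b ∈ B')
    (hm : ∀ ν : ℕ, ∀ b ∈ B', (⇑D)^[ν + 1] b = 0 →
      ∃ c ∈ B, (⇑D)^[ν + 1] c = 0 ∧ (⇑D)^[ν] c = (⇑D)^[ν] b) :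
    B = B' := by
  refine le_antisymm hBB' fun b hb => ?_
  obtain ⟨k, hk⟩ := hln b
  -- Induction on the nilpotency order `k` of `b`: subtracting an element of `B` with the same
  -- leading term `D^k b` lowers the order.
  induction k generalizing b with
  | zero =>
    have h0 : b = 0 := hk
    exact h0 ▸ B.zero_mem
  | succ k ih =>
    obtain ⟨c, hc, -, hcb⟩ := hm k b hb hk
    have hbc : b - c ∈ B := by
      refine ih (b - c) (B'.sub_mem hb (hBB' hc)) ?_
      rw [iterate_map_sub, hcb, sub_self]
    simpa using B.add_mem hbc hc
end

section
/- Let A be a commutative ℚ-algebra, D : A → A a locally nilpotent derivation, and let B, B' ⊆ A be D-stable subalgebras both containing ker D. Assume: (i) m_ν(B) = m_ν(B') for all ν ∈ ℕ; and (ii) the associated graded algebra of B is generated in degree 1, i.e. for every ν ≥ 1 the ideal m_ν(B) of the ring ker D equals the ν-th power ideal (m_1(B))^ν. Then B = B'. (An affine extension whose associated graded algebra is generated in degree 1 is uniquely determined by that graded algebra.) -/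
/-!
The subalgebra `B ⊓ B'` contains `ker D`, and it already realises all leading coefficients of `B`
and of `B'`. In degree one: if `b ∈ B` and `b' ∈ B'` are killed by `D²` and `D b = D b'`, then
`b - b' ∈ ker D ⊆ B'`, so `b ∈ B ⊓ B'`. In degree `ν`, an element `e * ∏ gᵢ` with `D e = 0` and
`gᵢ = D bᵢ`, `bᵢ ∈ B ⊓ B'`, `D² bᵢ = 0`, equals `D^ν ((ν!)⁻¹ e ∏ bᵢ)` (`iterate_prod`), and such
elements generate `m_ν(B) = m_ν(B')` additively. Finally, a subalgebra that contains `ker D` and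
realises all leading coefficients of `S` contains `S`: induct on the order of nilpotency,
subtracting an element with the same leading coefficient (`le_of_leading`).
-/

section LocallyNilpotent

variable {A : Type*} [CommRing A] [Algebra ℚ A] (D : Derivation ℚ A A)

lemma iterate_mul_of_ker {e : A} (he : D e = 0) (n : ℕ) (x : A) :
    (⇑D)^[n] (e * x) = e * (⇑D)^[n] x := by
  induction n with
  | zero => simp
  | succ n ih => simp [Function.iterate_succ_apply', ih, Derivation.leibniz, he]

/-- The Leibniz formula for `D^(n+1)` of a product stops after two terms when `D² b = 0`. -/
lemma iterate_mul_of_sq {b : A} (hb : D (D b) = 0) (n : ℕ) (a : A) :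
    (⇑D)^[n + 1] (a * b) = (⇑D)^[n + 1] a * b + (n + 1) * ((⇑D)^[n] a * D b) := by
  induction n with
  | zero => simp [Derivation.leibniz]; ring
  | succ n ih =>
    rw [Function.iterate_succ_apply', ih, Function.iterate_succ_apply' (⇑D) (n + 1),
      Function.iterate_succ_apply' (⇑D) n]
    simp [Derivation.leibniz, hb]
    ring

lemma iterate_prod (n : ℕ) (b : Fin n → A) (hb : ∀ i, D (D (b i)) = 0) :
    (⇑D)^[n + 1] (∏ i, b i) = 0 ∧ (⇑D)^[n] (∏ i, b i) = (n.factorial : A) * ∏ i, D (b i) := by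
  induction n with
  | zero => simp
  | succ n ih =>
    obtain ⟨h1, h2⟩ := ih (fun i => b i.castSucc) (fun i => hb _)
    rw [Fin.prod_univ_castSucc, Fin.prod_univ_castSucc, iterate_mul_of_sq D (hb _),
      iterate_mul_of_sq D (hb _), Function.iterate_succ_apply' (⇑D) (n + 1), h1, h2]
    constructor
    · simp
    · rw [Nat.factorial_succ]
      push_cast
      ring

/-- If `I` contains `ker D` and every leading coefficient `D^n s` of an element `s ∈ S` is also
the leading coefficient of an element of `I ⊓ S` of the same degree, then `S ≤ I`. -/
lemma le_of_leading (hln : ∀ a : A, ∃ k : ℕ, (⇑D)^[k] a = 0) (S I : Subalgebra ℚ A)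
    (hk : ∀ a : A, D a = 0 → a ∈ I)
    (h : ∀ n, 1 ≤ n → ∀ s ∈ S, (⇑D)^[n + 1] s = 0 →
      ∃ c ∈ I ⊓ S, (⇑D)^[n + 1] c = 0 ∧ (⇑D)^[n] c = (⇑D)^[n] s) : S ≤ I := by
  have key : ∀ n, ∀ s ∈ S, (⇑D)^[n + 1] s = 0 → s ∈ I := by
    intro n
    induction n with
    | zero => intro s _ h0; exact hk s (by simpa using h0)
    | succ n ih =>
      intro s hs h0
      obtain ⟨c, hc, -, hc2⟩ := h (n + 1) (by omega) s hs h0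
      have := ih (s - c) (S.sub_mem hs hc.2) (by rw [iterate_map_sub, hc2, sub_self])
      simpa using I.add_mem this hc.1
  intro s hs
  obtain ⟨k, hk0⟩ := hln s
  exact key k s hs (by rw [Function.iterate_succ_apply', hk0, map_zero])

/-- Finite sums of elements `e * ∏ gᵢ`, with `D e = 0` and each `gᵢ` a leading coefficient of
degree one of `I`, are leading coefficients of degree `n` of `I`. -/
lemma exists_lift (I : Subalgebra ℚ A) (hk : ∀ a : A, D a = 0 → a ∈ I) (G : Set A)
    (hG : ∀ g ∈ G, ∃ c ∈ I, D (D c) = 0 ∧ D c = g) (n : ℕ) (s : A)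
    (hs : s ∈ AddSubgroup.closure {s : A | ∃ (e : A) (g : Fin n → A),
          D e = 0 ∧ (∀ i, g i ∈ G) ∧ s = e * ∏ i, g i}) :
    ∃ c ∈ I, (⇑D)^[n + 1] c = 0 ∧ (⇑D)^[n] c = s := by
  induction hs using AddSubgroup.closure_induction with
  | mem x hx =>
    obtain ⟨e, g, he, hg, rfl⟩ := hx
    choose b hbI hb hbg using fun i => hG (g i) (hg i)
    obtain ⟨h1, h2⟩ := iterate_prod D n b hb
    have he' : D ((n.factorial : ℚ)⁻¹ • e) = 0 := by rw [D.map_smul, he, smul_zero]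
    refine ⟨((n.factorial : ℚ)⁻¹ • e) * ∏ i, b i,
      I.mul_mem (hk _ he') (I.prod_mem fun i _ => hbI i), ?_, ?_⟩
    · rw [iterate_mul_of_ker D he', h1, mul_zero]
    · have hn : (n.factorial : ℚ) ≠ 0 := by exact_mod_cast n.factorial_ne_zero
      have hc : (n.factorial : A) = (n.factorial : ℚ) • (1 : A) := by
        rw [← Algebra.algebraMap_eq_smul_one, map_natCast]
      rw [iterate_mul_of_ker D he', h2, hc]
      simp only [hbg, smul_mul_assoc, one_mul, mul_smul_comm]
      rw [smul_smul, mul_inv_cancel₀ hn, one_smul]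
  | zero => exact ⟨0, I.zero_mem, iterate_map_zero D _, iterate_map_zero D _⟩
  | add x y _ _ hx hy =>
    obtain ⟨c, hc, hc1, hc2⟩ := hx
    obtain ⟨d, hd, hd1, hd2⟩ := hy
    exact ⟨c + d, I.add_mem hc hd, by rw [iterate_map_add, hc1, hd1, add_zero],
      by rw [iterate_map_add, hc2, hd2]⟩
  | neg x _ hx =>
    obtain ⟨c, hc, hc1, hc2⟩ := hx
    exact ⟨-c, I.neg_mem hc, by rw [iterate_map_neg, hc1, neg_zero],
      by rw [iterate_map_neg, hc2]⟩

end LocallyNilpotent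

/-- Let `A` be a commutative ℚ-algebra, `D : A → A` a locally nilpotent
derivation, and `B, B' ⊆ A` `D`-stable subalgebras both containing `ker D`.  If
`m_ν(B) = m_ν(B')` for all `ν`, and the associated graded algebra of `B` is generated in
degree one, i.e. `m_ν(B)` equals the `ν`-th power of the ideal `m_1(B)` of `ker D`
(finite sums of elements `e·g₁⋯g_ν` with `e ∈ ker D` and `gᵢ ∈ m_1(B)`) for all `ν ≥ 1`,
then `B = B'`. -/
theorem stmt5 {A : Type*} [CommRing A] [Algebra ℚ A] (D : Derivation ℚ A A)
    (hln : ∀ a : A, ∃ k : ℕ, (⇑D)^[k] a = 0)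
    (B B' : Subalgebra ℚ A)
    (hB : ∀ b ∈ B, D b ∈ B) (hB' : ∀ b ∈ B', D b ∈ B')
    (hkB : ∀ a : A, D a = 0 → a ∈ B) (hkB' : ∀ a : A, D a = 0 → a ∈ B')
    (m : Subalgebra ℚ A → ℕ → Set A)
    (hm : ∀ (C : Subalgebra ℚ A) (ν : ℕ),
      m C ν = {s : A | ∃ c ∈ C, (⇑D)^[ν + 1] c = 0 ∧ (⇑D)^[ν] c = s})
    (heq : ∀ ν : ℕ, m B ν = m B' ν)
    (hgen : ∀ ν : ℕ, 1 ≤ ν → m B ν =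
      ↑(AddSubgroup.closure {s : A | ∃ (e : A) (g : Fin ν → A),
          D e = 0 ∧ (∀ i, g i ∈ m B 1) ∧ s = e * ∏ i, g i})) :
    B = B' := by
  have hk : ∀ a : A, D a = 0 → a ∈ B ⊓ B' := fun a ha => ⟨hkB a ha, hkB' a ha⟩
  have hG : ∀ g ∈ m B 1, ∃ c ∈ B ⊓ B', D (D c) = 0 ∧ D c = g := by
    intro g hg
    have hg' := hg
    rw [heq, hm] at hg'
    rw [hm] at hg
    obtain ⟨b, hb, hb1, hb2⟩ := hg
    obtain ⟨b', hb', -, hb2'⟩ := hg'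
    refine ⟨b, ⟨hb, ?_⟩, hb1, hb2⟩
    have hsub : D (b - b') = 0 := by
      rw [map_sub, sub_eq_zero]
      exact hb2.trans hb2'.symm
    simpa using B'.add_mem (hkB' _ hsub) hb'
  have lift : ∀ n, 1 ≤ n → ∀ s ∈ m B n,
      ∃ c ∈ B ⊓ B', (⇑D)^[n + 1] c = 0 ∧ (⇑D)^[n] c = s := by
    intro n hn s hs
    rw [hgen n hn] at hs
    exact exists_lift D _ hk _ hG n s hs
  apply le_antisymm
  · refine (le_of_leading D hln B (B ⊓ B') hk fun n hn s hs h0 => ?_).trans inf_le_right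
    obtain ⟨c, hc, h⟩ := lift n hn ((⇑D)^[n] s) (by rw [hm]; exact ⟨s, hs, h0, rfl⟩)
    exact ⟨c, ⟨hc, hc.1⟩, h⟩
  · refine (le_of_leading D hln B' (B ⊓ B') hk fun n hn s hs h0 => ?_).trans inf_le_left
    obtain ⟨c, hc, h⟩ := lift n hn ((⇑D)^[n] s) (by rw [heq, hm]; exact ⟨s, hs, h0, rfl⟩)
    exact ⟨c, ⟨hc, hc.2⟩, h⟩
end

section
/- Let A := ℂ[X,Y,U,V]/⟨XV − YU − 1⟩ with x, y, u, v the images of X, Y, U, V, and let D : A → A be the ℂ-derivation with D x = D y = 0, D u = x, D v = y. Then the kernel of D equals the ℂ-subalgebra of A generated by x and y, i.e. the ring of invariants of the right 𝔾_a-action on SL₂ is ℂ[x, y]. -/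
/-!
Write `B = ℂ[x, y] ⊆ A`, a polynomial ring in `x` and `y` (`polyToSL2_injective`). Since
`x v - y u = 1`, every `a ∈ A` is the value `F(u, v)` of a form `F` over `B`, homogeneous of some
degree `n` in the two variables (`HomRep.exists_rep`). As `D = x ∂/∂u + y ∂/∂v` over `B`, iterating
gives `Dⁿ a = n! F(x, y)` (`HomRep.derivation_iterate`). If `D a = 0` and `n ≥ 1`, this forces
`F(x, y) = 0` in `B`. Because `x` is prime in `B` and does not divide `y`, such an `F` is a multiple
of `x V - y U`, whose value at `(u, v)` is `1`, so `a` is also the value of a form of degree `n - 1`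
(`HomRep.lower`). Descending to degree `0` gives `a ∈ B`. The other inclusion is immediate, since
`D` kills `x` and `y`.
-/

open MvPolynomial

noncomputable section

/-- The ideal `⟨XV − YU − 1⟩` of `ℂ[X, Y, U, V]` (with `X = X 0`, `Y = X 1`, `U = X 2`,
`V = X 3`). -/
def sl2Ideal : Ideal (MvPolynomial (Fin 4) ℂ) :=
  Ideal.span {X 0 * X 3 - X 1 * X 2 - 1}

/-- The coordinate ring `A = ℂ[X,Y,U,V]/⟨XV − YU − 1⟩` of `SL₂` over `ℂ`. -/
abbrev SL2R : Type := MvPolynomial (Fin 4) ℂ ⧸ sl2Ideal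

/-- `x`, the image of `X` in `A`. -/
def sx : SL2R := Ideal.Quotient.mk sl2Ideal (X 0)
/-- `y`, the image of `Y` in `A`. -/
def sy : SL2R := Ideal.Quotient.mk sl2Ideal (X 1)
/-- `u`, the image of `U` in `A`. -/
def su : SL2R := Ideal.Quotient.mk sl2Ideal (X 2)
/-- `v`, the image of `V` in `A`. -/
def sv : SL2R := Ideal.Quotient.mk sl2Ideal (X 3)

/-- The polynomial ring `ℂ[X, Y]` mapped to `A` by `X ↦ x`, `Y ↦ y`; its range is `ℂ[x, y]`. -/
def polyToSL2 : MvPolynomial (Fin 2) ℂ →ₐ[ℂ] SL2R := aeval ![sx, sy]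

lemma polyToSL2_X0 : polyToSL2 (X 0) = sx := by simp [polyToSL2]

lemma polyToSL2_X1 : polyToSL2 (X 1) = sy := by simp [polyToSL2]

lemma sl2_rel : sx * sv - sy * su = 1 := by
  have h : Ideal.Quotient.mk sl2Ideal (X 0 * X 3 - X 1 * X 2 - 1) = 0 :=
    Ideal.Quotient.eq_zero_iff_mem.2 (Ideal.subset_span rfl)
  simp only [map_sub, map_mul, map_one] at h
  exact sub_eq_zero.1 h

/-- `x` and `y` are algebraically independent: the point `(X, Y, 0, 1/X)` of `SL₂` over the
fraction field of `ℂ[X, Y]` gives a map out of `A` which restricts to the inclusion of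
`ℂ[X, Y]`. -/
lemma polyToSL2_injective : Function.Injective polyToSL2 := by
  let K := FractionRing (MvPolynomial (Fin 2) ℂ)
  let x' : K := algebraMap (MvPolynomial (Fin 2) ℂ) K (X 0)
  let y' : K := algebraMap (MvPolynomial (Fin 2) ℂ) K (X 1)
  have hx' : x' ≠ 0 := by
    simp only [x', ne_eq, FaithfulSMul.algebraMap_eq_zero_iff]
    exact X_ne_zero _
  let g : MvPolynomial (Fin 4) ℂ →ₐ[ℂ] K := aeval ![x', y', 0, x'⁻¹]
  have hg : ∀ a ∈ sl2Ideal, g a = 0 := by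
    intro a ha
    have : sl2Ideal ≤ RingHom.ker g := by
      rw [sl2Ideal, Ideal.span_singleton_le_iff_mem, RingHom.mem_ker]
      simp [g, mul_inv_cancel₀ hx']
    exact this ha
  let G : SL2R →ₐ[ℂ] K := Ideal.Quotient.liftₐ sl2Ideal g hg
  have hG : G.comp polyToSL2 = IsScalarTower.toAlgHom ℂ (MvPolynomial (Fin 2) ℂ) K := by
    ext i : 1
    fin_cases i
    · change G (polyToSL2 (X 0)) = x'
      rw [polyToSL2_X0]
      change g (X 0) = x'
      simp [g]
    · change G (polyToSL2 (X 1)) = y'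
      rw [polyToSL2_X1]
      change g (X 1) = y'
      simp [g]
  intro p q hpq
  apply IsFractionRing.injective (MvPolynomial (Fin 2) ℂ) K
  have hp := DFunLike.congr_fun hG p
  have hq := DFunLike.congr_fun hG q
  simp only [AlgHom.comp_apply, IsScalarTower.coe_toAlgHom'] at hp hq
  rw [← hp, ← hq, hpq]

/-- `HomRep n a s` says that `a = F(u, v)` and `s = F(X, Y)` for some form `F` of degree `n` in
two variables with coefficients in `ℂ[X, Y]`. The recursion splits such a form as
`F(U, V) = c Vⁿ⁺¹ + U G(U, V)` with `G` a form of degree `n`. -/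
def HomRep : ℕ → SL2R → MvPolynomial (Fin 2) ℂ → Prop
  | 0, a, s => a = polyToSL2 s
  | n + 1, a, s => ∃ c b t, HomRep n b t ∧ a = polyToSL2 c * sv ^ (n + 1) + su * b ∧
      s = c * X 1 ^ (n + 1) + X 0 * t

namespace HomRep

lemma add {n : ℕ} {a a' : SL2R} {s s' : MvPolynomial (Fin 2) ℂ} (h : HomRep n a s)
    (h' : HomRep n a' s') : HomRep n (a + a') (s + s') := by
  induction n generalizing a a' s s' with
  | zero => simp only [HomRep] at *; rw [h, h', map_add]
  | succ n ih =>
    obtain ⟨c, b, t, hb, rfl, rfl⟩ := h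
    obtain ⟨c', b', t', hb', rfl, rfl⟩ := h'
    exact ⟨c + c', b + b', t + t', ih hb hb', by rw [map_add]; ring, by ring⟩

lemma smul {n : ℕ} {a : SL2R} {s : MvPolynomial (Fin 2) ℂ} (d : MvPolynomial (Fin 2) ℂ)
    (h : HomRep n a s) : HomRep n (polyToSL2 d * a) (d * s) := by
  induction n generalizing a s with
  | zero => simp only [HomRep] at *; rw [h, map_mul]
  | succ n ih =>
    obtain ⟨c, b, t, hb, rfl, rfl⟩ := h
    exact ⟨d * c, polyToSL2 d * b, d * t, ih hb, by rw [map_mul]; ring, by ring⟩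

lemma su_mul {n : ℕ} {a : SL2R} {s : MvPolynomial (Fin 2) ℂ} (h : HomRep n a s) :
    HomRep (n + 1) (su * a) (X 0 * s) :=
  ⟨0, a, s, h, by simp, by simp⟩

lemma sv_mul {n : ℕ} {a : SL2R} {s : MvPolynomial (Fin 2) ℂ} (h : HomRep n a s) :
    HomRep (n + 1) (sv * a) (X 1 * s) := by
  induction n generalizing a s with
  | zero =>
    simp only [HomRep] at h
    exact ⟨s, 0, 0, by simp [HomRep], by rw [h]; ring, by ring⟩
  | succ n ih =>
    obtain ⟨c, b, t, hb, rfl, rfl⟩ := h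
    exact ⟨c, sv * b, X 1 * t, ih hb, by ring, by ring⟩

lemma sv_pow (n : ℕ) : HomRep n (sv ^ n) (X 1 ^ n) := by
  induction n with
  | zero => simp [HomRep]
  | succ n ih => rw [pow_succ', pow_succ']; exact ih.sv_mul

/-- Multiplying by `1 = x v - y u` raises the degree of a representation. -/
lemma raise {n : ℕ} {a : SL2R} {s : MvPolynomial (Fin 2) ℂ} (h : HomRep n a s) :
    HomRep (n + 1) a 0 := by
  have h1 := (h.sv_mul.smul (X 0)).add (h.su_mul.smul (-X 1))
  convert h1 using 1
  · rw [map_neg, polyToSL2_X0, polyToSL2_X1]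
    linear_combination (-a) * sl2_rel
  · ring

lemma raise_le {n m : ℕ} (hnm : n ≤ m) {a : SL2R} (h : ∃ s, HomRep n a s) :
    ∃ s, HomRep m a s := by
  induction m, hnm using Nat.le_induction with
  | base => exact h
  | succ m _ ih => exact ⟨0, ih.choose_spec.raise⟩

lemma exists_rep (a : SL2R) : ∃ n s, HomRep n a s := by
  obtain ⟨p, rfl⟩ := Ideal.Quotient.mk_surjective a
  induction p using MvPolynomial.induction_on with
  | C r => exact ⟨0, C r, (AlgHom.commutes polyToSL2 r).symm⟩
  | add p q hp hq =>
    obtain ⟨n, hp⟩ := hp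
    obtain ⟨m, hq⟩ := hq
    obtain ⟨s, hs⟩ := raise_le (le_max_left n m) hp
    obtain ⟨t, ht⟩ := raise_le (le_max_right n m) hq
    exact ⟨max n m, s + t, by rw [map_add]; exact hs.add ht⟩
  | mul_X p i hp =>
    obtain ⟨n, s, hs⟩ := hp
    rw [map_mul, mul_comm]
    fin_cases i
    · exact ⟨n, _, polyToSL2_X0 ▸ hs.smul (X 0)⟩
    · exact ⟨n, _, polyToSL2_X1 ▸ hs.smul (X 1)⟩
    · exact ⟨n + 1, _, hs.su_mul⟩
    · exact ⟨n + 1, _, hs.sv_mul⟩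

/-- If `F(X, Y) = 0` for `F = c Vⁿ⁺¹ + U G`, then `X ∣ c`, say `c = X d`, and
`F = d Vⁿ (X V - Y U) + U (G + d Y Vⁿ)` where the last form again vanishes at `(X, Y)`. -/
lemma split {n : ℕ} {a : SL2R} (h : HomRep (n + 1) a 0) :
    ∃ d b, HomRep n b 0 ∧ a = polyToSL2 d * sv ^ n + su * b := by
  obtain ⟨c, b, t, hb, rfl, h0⟩ := h
  have hdvd : (X 0 : MvPolynomial (Fin 2) ℂ) ∣ c := by
    have h1 : (X 0 : MvPolynomial (Fin 2) ℂ) ∣ c * X 1 ^ (n + 1) :=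
      ⟨-t, by linear_combination -h0⟩
    refine (X_prime.dvd_or_dvd h1).resolve_right fun h2 => ?_
    have := X_prime.dvd_of_dvd_pow h2
    simp [X_dvd_X] at this
  obtain ⟨d, rfl⟩ := hdvd
  have ht : t + d * X 1 * X 1 ^ n = 0 := by
    refine (mul_eq_zero.1 ?_).resolve_left (X_ne_zero (R := ℂ) (0 : Fin 2))
    linear_combination -h0
  refine ⟨d, b + polyToSL2 (d * X 1) * sv ^ n, ht ▸ hb.add ((sv_pow n).smul (d * X 1)), ?_⟩
  rw [map_mul, map_mul, polyToSL2_X0, polyToSL2_X1]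
  linear_combination polyToSL2 d * sv ^ n * sl2_rel

/-- A form `F` of degree `n + 1` with `F(X, Y) = 0` is a multiple of `X V - Y U`, which is `1`
at `(u, v)`, so `F(u, v)` is also the value of a form of degree `n`. -/
lemma lower {n : ℕ} {a : SL2R} (h : HomRep (n + 1) a 0) : ∃ s, HomRep n a s := by
  induction n generalizing a with
  | zero =>
    obtain ⟨d, b, hb, rfl⟩ := h.split
    simp only [HomRep, map_zero] at hb
    exact ⟨d, by simp [HomRep, hb]⟩
  | succ n ih =>
    obtain ⟨d, b, hb, rfl⟩ := h.split
    obtain ⟨s, hs⟩ := ih hb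
    exact ⟨_, ((sv_pow (n + 1)).smul d).add hs.su_mul⟩

end HomRep

lemma derivation_polyToSL2 {D : Derivation ℂ SL2R SL2R} (hx : D sx = 0) (hy : D sy = 0)
    (p : MvPolynomial (Fin 2) ℂ) : D (polyToSL2 p) = 0 := by
  induction p using MvPolynomial.induction_on with
  | C r => exact (congrArg D (AlgHom.commutes polyToSL2 r)).trans (D.map_algebraMap r)
  | add p q hp hq => rw [map_add, map_add, hp, hq, add_zero]
  | mul_X p i hp =>
    have hi : D (polyToSL2 (X i)) = 0 := by
      fin_cases i
      · exact polyToSL2_X0 ▸ hx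
      · exact polyToSL2_X1 ▸ hy
    rw [map_mul, D.leibniz, hp, hi, smul_zero, smul_zero, add_zero]

namespace HomRep

/-- `D` is `x ∂/∂u + y ∂/∂v` over `ℂ[x, y]`, so it lowers the degree of a form by one and, by
Euler's identity, multiplies its value at `(X, Y)` by the degree. -/
lemma derivation {D : Derivation ℂ SL2R SL2R}
    (hx : D sx = 0) (hy : D sy = 0) (hu : D su = sx) (hv : D sv = sy)
    {n : ℕ} {a : SL2R} {s : MvPolynomial (Fin 2) ℂ} (h : HomRep (n + 1) a s) :
    HomRep n (D a) ((n + 1 : ℕ) * s) := by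
  induction n generalizing a s with
  | zero =>
    obtain ⟨c, b, t, hb, rfl, rfl⟩ := h
    simp only [HomRep] at hb
    simp [HomRep, hb, hu, hv, derivation_polyToSL2 hx hy, polyToSL2_X0, polyToSL2_X1]
    ring
  | succ n ih =>
    obtain ⟨c, b, t, hb, rfl, rfl⟩ := h
    have h1 := (((sv_pow (n + 1)).smul (((n + 2 : ℕ) : MvPolynomial (Fin 2) ℂ) * c * X 1)).add
      (hb.smul (X 0))).add (ih hb).su_mul
    convert h1 using 1
    · rw [map_add, D.leibniz, D.leibniz, D.leibniz_pow, derivation_polyToSL2 hx hy, hu, hv]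
      simp only [map_mul, map_natCast, polyToSL2_X0, polyToSL2_X1, smul_eq_mul, nsmul_eq_mul,
        Nat.add_sub_cancel]
      push_cast
      ring
    · push_cast
      ring

lemma derivation_iterate {D : Derivation ℂ SL2R SL2R}
    (hx : D sx = 0) (hy : D sy = 0) (hu : D su = sx) (hv : D sv = sy)
    {n : ℕ} {a : SL2R} {s : MvPolynomial (Fin 2) ℂ} (h : HomRep n a s) :
    D^[n] a = polyToSL2 ((n.factorial : MvPolynomial (Fin 2) ℂ) * s) := by
  induction n generalizing a s with
  | zero => simpa [HomRep] using h
  | succ n ih =>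
    rw [Function.iterate_succ_apply, ih (h.derivation hx hy hu hv), Nat.factorial_succ]
    congr 1
    push_cast
    ring

/-- Descent on the degree: for `a` in the kernel, `0 = D^[n + 1] a = (n + 1)! F(x, y)`, so the
form representing `a` can be replaced by one of smaller degree. -/
lemma mem_range_of_derivation_eq_zero {D : Derivation ℂ SL2R SL2R}
    (hx : D sx = 0) (hy : D sy = 0) (hu : D su = sx) (hv : D sv = sy)
    {a : SL2R} (ha : D a = 0) {n : ℕ} {s : MvPolynomial (Fin 2) ℂ} (h : HomRep n a s) :
    ∃ p, polyToSL2 p = a := by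
  induction n generalizing s with
  | zero => exact ⟨s, h.symm⟩
  | succ n ih =>
    have h1 := h.derivation_iterate hx hy hu hv
    rw [Function.iterate_succ_apply, ha, Function.iterate_fixed (map_zero D)] at h1
    have h2 := (map_eq_zero_iff polyToSL2 polyToSL2_injective).1 h1.symm
    have h3 : s = 0 := (mul_eq_zero.1 h2).resolve_left
      (Nat.cast_ne_zero.2 (Nat.factorial_ne_zero _))
    subst h3
    exact ih h.lower.choose_spec

end HomRep

/-- For the locally nilpotent derivation `D` on `A = 𝒪(SL₂)` with
`D x = D y = 0`, `D u = x`, `D v = y`, the kernel of `D` equals the ℂ-subalgebra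
generated by `x` and `y`. -/
theorem stmt7 (D : Derivation ℂ SL2R SL2R)
    (hx : D sx = 0) (hy : D sy = 0) (hu : D su = sx) (hv : D sv = sy) :
    {a : SL2R | D a = 0} = ↑(Algebra.adjoin ℂ {sx, sy}) := by
  have hr : Algebra.adjoin ℂ {sx, sy} = polyToSL2.range := by
    rw [polyToSL2, ← Algebra.adjoin_range_eq_range_aeval, Matrix.range_cons_cons_empty]
  rw [hr]
  ext a
  constructor
  · intro ha
    obtain ⟨n, s, hs⟩ := HomRep.exists_rep a
    exact hs.mem_range_of_derivation_eq_zero hx hy hu hv ha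
  · rintro ⟨p, rfl⟩
    exact derivation_polyToSL2 hx hy p

end
end

section
/- Let A := ℂ[X,Y,U,V]/⟨XV − YU − 1⟩ with x, y, u, v the images of X, Y, U, V, and let D : A → A be the ℂ-derivation with D x = D y = 0, D u = x, D v = y. For every ν ∈ ℕ, the kernel of D^{ν+1} equals the ℂ-linear span of the images of the monomials x^i y^j u^k v^ℓ with k + ℓ ≤ ν. -/
/-!
Write `F n` for the span of the monomials `x^i y^j u^k v^l` with `k + l ≤ n`. Since `D` maps
`F (n + 1)` into `F n` and kills `F 0`, the inclusion `F ν ⊆ ker D^(ν+1)` is immediate.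

Conversely, the `F n` exhaust `A`, so it suffices to show that `a ∈ F (n + 1)` and
`D^(n+1) a = 0` force `a ∈ F n`. For `k + l = n + 1`,
`D^(n+1) (x^i y^j u^k v^l) = (n+1)! x^(i+k) y^(j+l)` (`iterate_mon`). On the other hand the relation
`x v - y u = 1` shows that modulo `F n` such a monomial depends only on the pair
`(i + k, j + l)` (`mon_sub_normalForm_mem`). Hence `a` is congruent modulo `F n` to the image of a
polynomial `p` in two variables under a linear map, with `D^(n+1) a = (n+1)! p(x, y)`
(`exists_poly`). As `x` and `y` are algebraically independent in `A` (`aeval_injective`), the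
vanishing of `D^(n+1) a` gives `p = 0`, whence `a ∈ F n`.
-/

open MvPolynomial

noncomputable section

/-- The monomial `x^i y^j u^k v^l` of `A`. -/
def mon (i j k l : ℕ) : SL2R := sx ^ i * sy ^ j * su ^ k * sv ^ l

/-- The span of the monomials of total degree at most `n` in `u` and `v`. -/
def F (n : ℕ) : Submodule ℂ SL2R :=
  Submodule.span ℂ {a : SL2R | ∃ i j k l : ℕ,
    k + l ≤ n ∧ a = sx ^ i * sy ^ j * su ^ k * sv ^ l}

lemma mon_mem {n : ℕ} (i j : ℕ) {k l : ℕ} (h : k + l ≤ n) : mon i j k l ∈ F n :=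
  Submodule.subset_span ⟨i, j, k, l, h, rfl⟩

lemma F_mono {m n : ℕ} (h : m ≤ n) : F m ≤ F n := by
  apply Submodule.span_mono
  rintro a ⟨i, j, k, l, hkl, rfl⟩
  exact ⟨i, j, k, l, hkl.trans h, rfl⟩

/-- The subspaces `F n` exhaust `A`. -/
lemma exists_mem_F (a : SL2R) : ∃ n, a ∈ F n := by
  obtain ⟨p, rfl⟩ := Ideal.Quotient.mk_surjective a
  induction p using MvPolynomial.induction_on' with
  | monomial s c =>
    refine ⟨s 2 + s 3, ?_⟩
    have h : Ideal.Quotient.mk sl2Ideal (monomial s c) = c • mon (s 0) (s 1) (s 2) (s 3) := by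
      rw [← mul_one c, ← smul_eq_mul, ← smul_monomial, MvPolynomial.monomial_eq,
        Finsupp.prod_fintype _ _ (by simp), Fin.prod_univ_four]
      simp only [mon, sx, sy, su, sv, C_1, one_mul, ← map_pow, ← map_mul, smul_eq_mul, mul_one]
      rfl
    rw [h]
    exact (F _).smul_mem _ (mon_mem _ _ le_rfl)
  | add p q hp hq =>
    obtain ⟨m, hm⟩ := hp
    obtain ⟨n, hn⟩ := hq
    refine ⟨max m n, ?_⟩
    rw [map_add]
    exact (F _).add_mem (F_mono (le_max_left _ _) hm) (F_mono (le_max_right _ _) hn)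

/-- Algebraic independence of `x` and `y`: the point `(x, y, u, v) = (X, Y, 0, 1/X)` of `SL₂`
over `ℂ(X, Y)` defines a ring map out of `A` that restricts to the inclusion
`ℂ[X, Y] ⊆ ℂ(X, Y)` on polynomials in `x` and `y`. -/
lemma aeval_injective :
    Function.Injective (aeval ![sx, sy] : MvPolynomial (Fin 2) ℂ →ₐ[ℂ] SL2R) := by
  let P := MvPolynomial (Fin 2) ℂ
  let K := FractionRing P
  let X' : K := algebraMap P K (X 0)
  let Y' : K := algebraMap P K (X 1)
  have hX : X' ≠ 0 := by
    intro h
    exact MvPolynomial.X_ne_zero (R := ℂ) (0 : Fin 2)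
      ((IsFractionRing.injective P K) (h.trans (map_zero _).symm))
  let f : MvPolynomial (Fin 4) ℂ →ₐ[ℂ] K := aeval ![X', Y', 0, X'⁻¹]
  have hf : ∀ a ∈ sl2Ideal, f a = 0 := by
    intro a ha
    have : sl2Ideal ≤ RingHom.ker f := by
      rw [sl2Ideal, Ideal.span_le, Set.singleton_subset_iff]
      have hX' := mul_inv_cancel₀ hX
      simp [f, RingHom.mem_ker, hX']
    exact this ha
  let g : SL2R →ₐ[ℂ] K := Ideal.Quotient.liftₐ sl2Ideal f hf
  have hg : g.comp (aeval ![sx, sy]) = IsScalarTower.toAlgHom ℂ P K := by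
    apply MvPolynomial.algHom_ext
    intro i
    fin_cases i
    · change g (aeval ![sx, sy] (X 0)) = algebraMap P K (X 0)
      rw [aeval_X]
      change f (X 0) = _
      simp [f, X']
    · change g (aeval ![sx, sy] (X 1)) = algebraMap P K (X 1)
      rw [aeval_X]
      change f (X 1) = _
      simp [f, Y']
  intro p q hpq
  apply IsFractionRing.injective P K
  have h1 := DFunLike.congr_fun hg p
  have h2 := DFunLike.congr_fun hg q
  simp only [AlgHom.comp_apply] at h1 h2
  rw [hpq] at h1
  exact h1.symm.trans h2

/-- A representative of the class modulo `F (n - 1)` of all `x^i y^j u^k v^l` with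
`k + l = n`, `i + k = a` and `j + l = b`, namely the one with `k` as large as possible.
Meaningful only for `n ≤ a + b`. -/
def normalForm (n a b : ℕ) : SL2R :=
  mon (a - min a n) (b - (n - min a n)) (min a n) (n - min a n)

/-- The relation `x v = y u + 1` moves a factor `x v` to `y u` modulo lower terms, until `x` or `v`
is used up. -/
lemma mon_sub_normalForm_mem (n i j k l : ℕ) (h : k + l = n + 1) :
    mon i j k l - normalForm (n + 1) (i + k) (j + l) ∈ F n := by
  induction i generalizing j k l with
  | zero =>
    have h1 : min k (n + 1) = k := by omega
    have h2 : n + 1 - k = l := by omega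
    simp [normalForm, h1, h2]
  | succ i ih =>
    cases l with
    | zero =>
      have h1 : min (i + 1 + k) (n + 1) = k := by omega
      have h2 : n + 1 - k = 0 := by omega
      simp [normalForm, h1, h2]
    | succ l =>
      have h1 := ih (j + 1) (k + 1) l (by omega)
      have h2 : mon (i + 1) j k (l + 1) - mon i (j + 1) (k + 1) l = mon i j k l := by
        simp only [mon]
        linear_combination (sx ^ i * sy ^ j * su ^ k * sv ^ l) * sl2_rel
      have h3 : mon i j k l ∈ F n := mon_mem _ _ (by omega)
      rw [← h2] at h3
      have h4 := (F n).add_mem h3 h1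
      rw [sub_add_sub_cancel] at h4
      rwa [show i + 1 + k = i + (k + 1) by omega, show j + (l + 1) = j + 1 + l by omega]

section

variable {D : Derivation ℂ SL2R SL2R}

lemma D_mon (hx : D sx = 0) (hy : D sy = 0) (hu : D su = sx) (hv : D sv = sy) (i j k l : ℕ) :
    D (mon i j k l) =
      (k : ℂ) • mon (i + 1) j (k - 1) l + (l : ℂ) • mon i (j + 1) k (l - 1) := by
  simp only [mon, Derivation.leibniz, Derivation.leibniz_pow, hx, hy, hu, hv, smul_eq_mul,
    Nat.cast_smul_eq_nsmul, nsmul_eq_mul]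
  ring

lemma D_mem (hx : D sx = 0) (hy : D sy = 0) (hu : D su = sx) (hv : D sv = sy) (n : ℕ)
    {a : SL2R} (ha : a ∈ F (n + 1)) : D a ∈ F n := by
  have : F (n + 1) ≤ (F n).comap (D : SL2R →ₗ[ℂ] SL2R) := by
    refine Submodule.span_le.2 ?_
    rintro _ ⟨i, j, k, l, h, rfl⟩
    change D (mon i j k l) ∈ F n
    rw [D_mon hx hy hu hv]
    refine (F n).add_mem ?_ ?_
    · rcases k with _ | k
      · simp
      · exact (F n).smul_mem _ (mon_mem _ _ (by omega))
    · rcases l with _ | l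
      · simp
      · exact (F n).smul_mem _ (mon_mem _ _ (by omega))
  exact this ha

lemma D_eq_zero (hx : D sx = 0) (hy : D sy = 0) (hu : D su = sx) (hv : D sv = sy)
    {a : SL2R} (ha : a ∈ F 0) : D a = 0 := by
  have : F 0 ≤ LinearMap.ker (D : SL2R →ₗ[ℂ] SL2R) := by
    refine Submodule.span_le.2 ?_
    rintro _ ⟨i, j, k, l, h, rfl⟩
    obtain ⟨rfl, rfl⟩ : k = 0 ∧ l = 0 := by omega
    change D (mon i j 0 0) = 0
    simp [D_mon hx hy hu hv]
  exact this ha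

lemma iterate_eq_zero (hx : D sx = 0) (hy : D sy = 0) (hu : D su = sx) (hv : D sv = sy) (n : ℕ)
    {a : SL2R} (ha : a ∈ F n) : (⇑D)^[n + 1] a = 0 := by
  induction n generalizing a with
  | zero => exact D_eq_zero hx hy hu hv ha
  | succ n ih =>
    rw [Function.iterate_succ_apply]
    exact ih (D_mem hx hy hu hv n ha)

lemma iterate_eq_pow (n : ℕ) (a : SL2R) :
    (⇑D)^[n] a = ((D : SL2R →ₗ[ℂ] SL2R) ^ n) a := by
  rw [Module.End.pow_apply]
  rfl

lemma iterate_mon (hx : D sx = 0) (hy : D sy = 0) (hu : D su = sx) (hv : D sv = sy)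
    (n i j k l : ℕ) (h : k + l = n) :
    (⇑D)^[n] (mon i j k l) = (n.factorial : ℂ) • mon (i + k) (j + l) 0 0 := by
  induction n generalizing i j k l with
  | zero =>
    obtain ⟨rfl, rfl⟩ : k = 0 ∧ l = 0 := by omega
    simp
  | succ n ih =>
    rw [Function.iterate_succ_apply, D_mon hx hy hu hv, iterate_eq_pow, map_add, map_smul,
      map_smul, ← iterate_eq_pow, ← iterate_eq_pow]
    have h1 : (k : ℂ) • (⇑D)^[n] (mon (i + 1) j (k - 1) l) =
        (k : ℂ) • (n.factorial : ℂ) • mon (i + k) (j + l) 0 0 := by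
      rcases k with _ | k
      · simp
      · rw [Nat.add_sub_cancel, ih _ _ _ _ (by omega), show i + 1 + k = i + (k + 1) by omega]
    have h2 : (l : ℂ) • (⇑D)^[n] (mon i (j + 1) k (l - 1)) =
        (l : ℂ) • (n.factorial : ℂ) • mon (i + k) (j + l) 0 0 := by
      rcases l with _ | l
      · simp
      · rw [Nat.add_sub_cancel, ih _ _ _ _ (by omega), show j + 1 + l = j + (l + 1) by omega]
    rw [h1, h2, ← add_smul, smul_smul, Nat.factorial_succ, ← h]
    push_cast
    rfl

/-- The linear map `ℂ[X, Y] → A` sending `X^a Y^b` to `normalForm n a b`. -/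
def normalFormMap (n : ℕ) : MvPolynomial (Fin 2) ℂ →ₗ[ℂ] SL2R :=
  (MvPolynomial.basisMonomials (Fin 2) ℂ).constr ℂ fun s => normalForm n (s 0) (s 1)

lemma normalFormMap_monomial (n : ℕ) (s : Fin 2 →₀ ℕ) :
    normalFormMap n (monomial s 1) = normalForm n (s 0) (s 1) := by
  have := (MvPolynomial.basisMonomials (Fin 2) ℂ).constr_basis ℂ
    (fun s => normalForm n (s 0) (s 1)) s
  simpa [normalFormMap] using this

/-- The leading part of an element of `F (n + 1)`, recorded as a polynomial `p` in two variables: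
`p` determines the element modulo `F n`, and `D^(n+1)` computes `p(x, y)` up to a factor
`(n+1)!`. -/
lemma exists_poly (hx : D sx = 0) (hy : D sy = 0) (hu : D su = sx) (hv : D sv = sy) (n : ℕ)
    {a : SL2R} (ha : a ∈ F (n + 1)) :
    ∃ p : MvPolynomial (Fin 2) ℂ,
      (⇑D)^[n + 1] a = ((n + 1).factorial : ℂ) • aeval ![sx, sy] p ∧
      a - normalFormMap (n + 1) p ∈ F n := by
  induction ha using Submodule.span_induction with
  | mem a h =>
    obtain ⟨i, j, k, l, h, rfl⟩ := h
    change ∃ p : MvPolynomial (Fin 2) ℂ,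
      (⇑D)^[n + 1] (mon i j k l) = ((n + 1).factorial : ℂ) • aeval ![sx, sy] p ∧
      mon i j k l - normalFormMap (n + 1) p ∈ F n
    rcases h.lt_or_eq with h | h
    · have hm : mon i j k l ∈ F n := mon_mem _ _ (by omega)
      refine ⟨0, ?_, by simpa using hm⟩
      rw [iterate_eq_zero hx hy hu hv n hm]
      simp
    · let s : Fin 2 →₀ ℕ := Finsupp.equivFunOnFinite.symm ![i + k, j + l]
      have s0 : s 0 = i + k := rfl
      have s1 : s 1 = j + l := rfl
      refine ⟨monomial s 1, ?_, ?_⟩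
      · rw [iterate_mon hx hy hu hv _ _ _ _ _ h, aeval_monomial,
          Finsupp.prod_fintype _ _ (by simp), Fin.prod_univ_two, s0, s1]
        simp [mon]
      · rw [normalFormMap_monomial, s0, s1]
        exact mon_sub_normalForm_mem n i j k l h
  | zero =>
    refine ⟨0, ?_, by simp⟩
    rw [iterate_eq_pow]
    simp
  | add a b _ _ ha hb =>
    obtain ⟨p, hp, hp'⟩ := ha
    obtain ⟨q, hq, hq'⟩ := hb
    refine ⟨p + q, ?_, ?_⟩
    · rw [iterate_eq_pow, map_add, ← iterate_eq_pow, ← iterate_eq_pow, hp, hq, map_add, smul_add]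
    · rw [map_add, add_sub_add_comm]
      exact (F n).add_mem hp' hq'
  | smul c a _ ha =>
    obtain ⟨p, hp, hp'⟩ := ha
    refine ⟨c • p, ?_, ?_⟩
    · rw [iterate_eq_pow, map_smul, ← iterate_eq_pow, hp, map_smul, smul_comm]
    · rw [map_smul, ← smul_sub]
      exact (F n).smul_mem _ hp'

lemma mem_F_of_iterate_eq_zero (hx : D sx = 0) (hy : D sy = 0) (hu : D su = sx) (hv : D sv = sy)
    (n : ℕ) {a : SL2R} (ha : a ∈ F (n + 1)) (h : (⇑D)^[n + 1] a = 0) : a ∈ F n := by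
  obtain ⟨p, hp, hp'⟩ := exists_poly hx hy hu hv n ha
  have hfac : ((n + 1).factorial : ℂ) ≠ 0 := Nat.cast_ne_zero.2 (Nat.factorial_ne_zero _)
  have h0 : aeval ![sx, sy] p = 0 := (smul_eq_zero.1 (hp.symm.trans h)).resolve_left hfac
  have hp0 : p = 0 := aeval_injective (h0.trans (map_zero _).symm)
  simpa [hp0] using hp'

end

/-- For the derivation `D` on `A = 𝒪(SL₂)` with `D x = D y = 0`, `D u = x`,
`D v = y`, the kernel of `D^{ν+1}` equals the ℂ-linear span of the monomials
`x^i y^j u^k v^ℓ` with `k + ℓ ≤ ν`. -/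
theorem stmt8 (D : Derivation ℂ SL2R SL2R)
    (hx : D sx = 0) (hy : D sy = 0) (hu : D su = sx) (hv : D sv = sy) (ν : ℕ) :
    {a : SL2R | (⇑D)^[ν + 1] a = 0} =
      ↑(Submodule.span ℂ {a : SL2R | ∃ i j k l : ℕ,
          k + l ≤ ν ∧ a = sx ^ i * sy ^ j * su ^ k * sv ^ l}) := by
  change _ = (F ν : Set SL2R)
  ext a
  refine ⟨fun h => ?_, fun h => iterate_eq_zero hx hy hu hv ν h⟩
  have h : (⇑D)^[ν + 1] a = 0 := h
  obtain ⟨n, hn⟩ := exists_mem_F a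
  induction n with
  | zero => exact F_mono (Nat.zero_le _) hn
  | succ n ih =>
    by_cases hle : n + 1 ≤ ν
    · exact F_mono hle hn
    · apply ih
      apply mem_F_of_iterate_eq_zero hx hy hu hv n hn
      obtain ⟨t, rfl⟩ : ∃ t, n = t + ν := ⟨n - ν, by omega⟩
      rw [add_assoc, Function.iterate_add_apply, h, iterate_eq_pow, map_zero]

end
end

section
/- Fix an integer n ≥ 1. The ring B_n (the ℂ-subalgebra of A generated by x, y, the elements x^i y^{n+1−i} v for i = 0, …, n+1, and x^{n+1} u) is an integral domain which is integrally closed in its field of fractions. (The affine variety P̂_n = Spec(B_n) is normal.) -/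
/-!
Since `v = (1 + yu)/x`, the ring `A` embeds into `ℂ(x, y, u)`, and `A[1/x] = ℂ[x, y, u][1/x]` is
integrally closed. Hence an element `f` of the fraction field that is integral over `A` satisfies
`x ^ k f ∈ A` for some `k`, and an automorphism of `A` exchanging `x` and `y` up to sign gives
`y ^ l f ∈ A`. As `xv − yu = 1`, the elements `x ^ k` and `y ^ l` generate the unit ideal, so
`f ∈ A`: the ring `A` is normal (`isIntegrallyClosed_SL2R`). It remains to show that `B_n` is
integrally closed in `A`.

Give `x, y` weight `1` and `u, v` weight `−(n + 1)`. The substitution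
`x ↦ tx, y ↦ ty, u ↦ t^{−(n+1)}u` embeds `A` into Laurent series in `t`, and `B_n` consists of
the elements of `A` whose series has no pole; such elements form an integrally closed subring,
because the power series in `t` do. That the elements of `B_n` have no pole is checked on the
generators. Conversely, let `a ∈ A` have no pole and choose `k` with `x ^ k a ∈ ℂ[x, y, u]`. Then
all monomials of `x ^ k a` have weight at least `k`. If `x b` is represented by a polynomial of
weight at least `m + 1`, then `b` is represented by one of weight at least `m`
(`RepGE.of_sx_mul`): modulo `X` the relation becomes `YU + 1`, and a polynomial divisible by
`YU + 1` has a quotient of weight larger by `n`, as `YU` has weight `−n ≤ 0`. So `a` is represented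
by a polynomial of weight at least `0`, and its monomials `x ^ i y ^ j u ^ c v ^ d` with
`i + j ≥ (n + 1)(c + d)` are products of elements of `B_n` (`monomial_mem`).
-/

open MvPolynomial

noncomputable section

/-- The ℂ-subalgebra `B_n ⊆ A` generated by `x`, `y`, the elements `x^i y^{n+1−i} v` for
`i = 0, …, n+1`, and `x^{n+1} u`; it is the coordinate ring of the affine extension
`P̂_n` of `SL₂`. -/
def Bn (n : ℕ) : Subalgebra ℂ SL2R :=
  Algebra.adjoin ℂ ({sx, sy, sx ^ (n + 1) * su} ∪
    {w : SL2R | ∃ i ≤ n + 1, w = sx ^ i * sy ^ (n + 1 - i) * sv})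

namespace BnNormal

/-- The polynomial ring `ℂ[x, y, u]`, which becomes equal to `A` after inverting `x`. -/
abbrev P3 : Type := MvPolynomial (Fin 3) ℂ

/-- The field `ℂ(x, y, u)`, the fraction field of `A`. -/
abbrev K3 : Type := FractionRing P3

/-! ### Homomorphisms out of `A` -/

theorem sl2_rel : sx * sv - sy * su = 1 := by
  have h : Ideal.Quotient.mk sl2Ideal (X 0 * X 3 - X 1 * X 2 - 1) = 0 :=
    Ideal.Quotient.eq_zero_iff_mem.mpr (Ideal.subset_span rfl)
  rw [map_sub, map_sub, map_mul, map_mul, map_one, sub_eq_zero] at h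
  exact h

/-- A quadruple `a, b, c, d` in a `ℂ`-algebra with `ad − bc = 1` defines a homomorphism from `A`. -/
def liftSL2 {S : Type*} [CommRing S] [Algebra ℂ S] (a b c d : S) (h : a * d - b * c = 1) :
    SL2R →ₐ[ℂ] S :=
  Ideal.Quotient.liftₐ sl2Ideal (aeval ![a, b, c, d]) (by
    intro F hF
    have hle : sl2Ideal ≤ RingHom.ker (aeval ![a, b, c, d] : MvPolynomial (Fin 4) ℂ →ₐ[ℂ] S) := by
      rw [sl2Ideal, Ideal.span_singleton_le_iff_mem, RingHom.mem_ker]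
      simp [h]
    exact hle hF)

section lift
variable {S : Type*} [CommRing S] [Algebra ℂ S] (a b c d : S) (h : a * d - b * c = 1)

theorem liftSL2_mk (F : MvPolynomial (Fin 4) ℂ) :
    liftSL2 a b c d h (Ideal.Quotient.mk sl2Ideal F) = aeval ![a, b, c, d] F := rfl

@[simp] theorem liftSL2_sx : liftSL2 a b c d h sx = a := by simp [sx, liftSL2_mk]
@[simp] theorem liftSL2_sy : liftSL2 a b c d h sy = b := by simp [sy, liftSL2_mk]
@[simp] theorem liftSL2_su : liftSL2 a b c d h su = c := by simp [su, liftSL2_mk]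
@[simp] theorem liftSL2_sv : liftSL2 a b c d h sv = d := by simp [sv, liftSL2_mk]
end lift

theorem sl2_hom_ext {S : Type*} [CommRing S] [Algebra ℂ S] {f g : SL2R →ₐ[ℂ] S}
    (h0 : f sx = g sx) (h1 : f sy = g sy) (h2 : f su = g su) (h3 : f sv = g sv) : f = g := by
  apply Ideal.Quotient.algHom_ext
  apply MvPolynomial.algHom_ext
  intro i
  fin_cases i
  exacts [h0, h1, h2, h3]

/-- The automorphism `x ↦ y, y ↦ −x, u ↦ v, v ↦ −u` of `A`. -/
def swapEquiv : SL2R ≃ₐ[ℂ] SL2R :=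
  AlgEquiv.ofAlgHom
    (liftSL2 sy (-sx) sv (-su) (by linear_combination sl2_rel))
    (liftSL2 (-sy) sx (-sv) su (by linear_combination sl2_rel))
    (by apply sl2_hom_ext <;> simp)
    (by apply sl2_hom_ext <;> simp)

theorem swapEquiv_symm_sx : swapEquiv.symm sx = -sy :=
  liftSL2_sx (-sy) sx (-sv) su (by linear_combination sl2_rel)

/-- The inclusion `ℂ[x, y, u] → A`. -/
def incl : P3 →ₐ[ℂ] SL2R := aeval ![sx, sy, su]

/-- Every element of `A` lies in `ℂ[x, y, u]` after multiplication by a power of `x`. -/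
theorem exists_pow_mul (a : SL2R) : ∃ (k : ℕ) (p : P3), sx ^ k * a = incl p := by
  obtain ⟨F, rfl⟩ := Ideal.Quotient.mk_surjective a
  induction F using MvPolynomial.induction_on with
  | C c => exact ⟨0, C c, by rw [pow_zero, one_mul]; exact (incl.commutes c).symm⟩
  | add F G hF hG =>
    obtain ⟨k, p, hp⟩ := hF
    obtain ⟨l, q, hq⟩ := hG
    refine ⟨k + l, X 0 ^ l * p + X 0 ^ k * q, ?_⟩
    rw [map_add, map_add, map_mul, map_mul, ← hp, ← hq]
    simp only [incl, map_pow, aeval_X, Matrix.cons_val_zero]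
    ring
  | mul_X F i hF =>
    obtain ⟨k, p, hp⟩ := hF
    rw [map_mul]
    fin_cases i
    · refine ⟨k, p * X 0, ?_⟩
      rw [map_mul, ← hp, ← mul_assoc]; simp [incl, sx]
    · refine ⟨k, p * X 1, ?_⟩
      rw [map_mul, ← hp, ← mul_assoc]; simp [incl, sy]
    · refine ⟨k, p * X 2, ?_⟩
      rw [map_mul, ← hp, ← mul_assoc]; simp [incl, su]
    · refine ⟨k + 1, p * (1 + X 1 * X 2), ?_⟩
      have h1 : incl (1 + X 1 * X 2) = sx * sv := by
        simp only [incl, map_add, map_mul, map_one, aeval_X]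
        simp
        linear_combination -sl2_rel
      rw [map_mul, ← hp, h1]
      change sx ^ (k + 1) * (_ * sv) = _
      ring

/-! ### Weights and division by `x` -/

/-- The weight of a monomial of `ℂ[X, Y, U, V]`, where `X, Y` have weight `1` and `U, V` have
weight `−(n + 1)`. -/
def wt (n : ℕ) (d : Fin 4 →₀ ℕ) : ℤ := d 0 + d 1 - (n + 1) * (d 2 + d 3)

/-- All monomials occurring in `F` have weight at least `m`. -/
def WtGE (n : ℕ) (m : ℤ) (F : MvPolynomial (Fin 4) ℂ) : Prop :=
  ∀ d, coeff d F ≠ 0 → m ≤ wt n d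

theorem coeff_mul_rel (G : MvPolynomial (Fin 4) ℂ) (d : Fin 4 →₀ ℕ) :
    coeff d ((X 1 * X 2 + 1) * G) =
      (if Finsupp.single 1 1 + Finsupp.single 2 1 ≤ d then
        coeff (d - (Finsupp.single 1 1 + Finsupp.single 2 1)) G else 0) + coeff d G := by
  have : (X 1 * X 2 : MvPolynomial (Fin 4) ℂ)
      = monomial (Finsupp.single 1 1 + Finsupp.single 2 1) 1 := by
    rw [X, X, monomial_mul, one_mul]
  rw [add_mul, one_mul, coeff_add, this, coeff_monomial_mul', one_mul]

/-- Since `YU` is the part of lowest weight of `YU + 1`, dividing by `YU + 1` raises the weight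
by `n`. If `G` had a monomial of smaller weight, then multiplying it by `YU` would
repeatedly produce further monomials of `G`. -/
theorem WtGE.of_mul {n : ℕ} {m : ℤ} {G : MvPolynomial (Fin 4) ℂ}
    (h : WtGE n m ((X 1 * X 2 + 1) * G)) : WtGE n (m + n) G := by
  intro d hd
  by_contra! hlt
  set s : Fin 4 →₀ ℕ := Finsupp.single 1 1 + Finsupp.single 2 1 with hs
  have hwt : ∀ e, wt n (e + s) = wt n e - n := by
    intro e
    simp [wt, hs]
    ring
  have step : ∀ k : ℕ, coeff (d + k • s) G ≠ 0 ∧ wt n (d + k • s) < m + n := by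
    intro k
    induction k with
    | zero => simpa using ⟨hd, hlt⟩
    | succ k ih =>
      rw [succ_nsmul, ← add_assoc]
      have h1 := hwt (d + k • s)
      refine ⟨fun h0 => ?_, by omega⟩
      have h2 : coeff (d + k • s + s) ((X 1 * X 2 + 1) * G) ≠ 0 := by
        rw [coeff_mul_rel, ← hs, if_pos le_add_self, add_tsub_cancel_right, h0, add_zero]
        exact ih.1
      have := h _ h2
      omega
  have inj : Function.Injective (fun k : ℕ => d + k • s) := by
    intro k l hkl
    have := DFunLike.congr_fun hkl 1
    simpa [hs] using this
  refine Set.infinite_range_of_injective inj (G.support.finite_toSet.subset ?_)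
  rintro _ ⟨k, rfl⟩
  simpa using (step k).1

/-- Comparing the terms without `X` in `X a = F + (XV − YU − 1)G` shows that `F mod X` is
`YU + 1` times a polynomial `G0`, and that `a` is congruent to `F div X + V G0` modulo
`XV − YU − 1`. -/
theorem saturation_aux (a F G : MvPolynomial (Fin 4) ℂ)
    (h : X 0 * a = F + (X 0 * X 3 - X 1 * X 2 - 1) * G) :
    ∃ G0 G1 : MvPolynomial (Fin 4) ℂ,
      (X 1 * X 2 + 1) * G0 = modMonomial F (Finsupp.single 0 1) ∧
      a = divMonomial F (Finsupp.single 0 1) + X 3 * G0 + (X 0 * X 3 - X 1 * X 2 - 1) * G1 := by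
  set F1 := divMonomial F (Finsupp.single 0 1)
  set F0 := modMonomial F (Finsupp.single 0 1)
  have hF : X 0 * F1 + F0 = F := divMonomial_add_modMonomial_single F 0
  set G1 := divMonomial G (Finsupp.single 0 1)
  set G0 := modMonomial G (Finsupp.single 0 1)
  have hG : X 0 * G1 + G0 = G := divMonomial_add_modMonomial_single G 0
  have key : X 0 * (a - F1 - (X 0 * X 3 - X 1 * X 2 - 1) * G1 - X 3 * G0)
      = F0 - (X 1 * X 2 + 1) * G0 := by
    rw [← hF, ← hG] at h
    linear_combination h
  -- The right side does not involve `X 0`, so both sides vanish.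
  have hz : F0 - (X 1 * X 2 + 1) * G0 = 0 := by
    ext d
    rw [coeff_zero]
    by_cases h0 : d 0 = 0
    · rw [← key, coeff_X_mul', if_neg (by simp [h0])]
    · have hle : ∀ e : Fin 4 →₀ ℕ, e 0 ≠ 0 → Finsupp.single 0 1 ≤ e := by
        intro e he
        rw [Finsupp.single_le_iff]
        omega
      rw [coeff_sub, coeff_mul_rel, coeff_modMonomial_of_le _ (hle d h0),
        coeff_modMonomial_of_le _ (hle d h0)]
      split_ifs
      · rw [coeff_modMonomial_of_le _ (hle _ (by simpa using h0))]
        simp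
      · simp
  refine ⟨G0, G1, (sub_eq_zero.mp hz).symm, ?_⟩
  rw [hz] at key
  have := (mul_eq_zero.mp key).resolve_left (X_ne_zero 0)
  linear_combination this

/-- The element `a` of `A` is represented by a polynomial of weight at least `m`. -/
def RepGE (n : ℕ) (m : ℤ) (a : SL2R) : Prop :=
  ∃ F, WtGE n m F ∧ Ideal.Quotient.mk sl2Ideal F = a

theorem mk_eq_mk_iff (F F' : MvPolynomial (Fin 4) ℂ) :
    Ideal.Quotient.mk sl2Ideal F = Ideal.Quotient.mk sl2Ideal F' ↔
      ∃ G, F = F' + (X 0 * X 3 - X 1 * X 2 - 1) * G := by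
  rw [Ideal.Quotient.mk_eq_mk_iff_sub_mem, sl2Ideal, Ideal.mem_span_singleton']
  constructor
  · rintro ⟨G, hG⟩
    exact ⟨G, by linear_combination -hG⟩
  · rintro ⟨G, hG⟩
    exact ⟨G, by linear_combination -hG⟩

theorem sx_mul_eq_zero (a : SL2R) (h : sx * a = 0) : a = 0 := by
  obtain ⟨F, rfl⟩ := Ideal.Quotient.mk_surjective a
  rw [sx, ← map_mul, ← map_zero (Ideal.Quotient.mk sl2Ideal), mk_eq_mk_iff] at h
  obtain ⟨G, hG⟩ := h
  obtain ⟨G0, G1, h0, h1⟩ := saturation_aux _ _ _ hG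
  rw [← map_zero (Ideal.Quotient.mk sl2Ideal), mk_eq_mk_iff]
  have hmod : modMonomial (0 : MvPolynomial (Fin 4) ℂ) (Finsupp.single 0 1) = 0 := by
    simpa using divMonomial_add_modMonomial_single (0 : MvPolynomial (Fin 4) ℂ) 0
  rw [hmod] at h0
  have hne : (X 1 * X 2 + 1 : MvPolynomial (Fin 4) ℂ) ≠ 0 := by
    intro h
    have := congrArg (aeval (fun _ => (0 : ℂ))) h
    simp at this
  rw [(mul_eq_zero.mp h0).resolve_left hne, zero_divMonomial] at h1
  exact ⟨G1, by linear_combination h1⟩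

/-- If `xa` is represented by a polynomial of weight at least `m + 1`, then `a` is
represented by a polynomial of weight at least `m`. -/
theorem RepGE.of_sx_mul {n : ℕ} {m : ℤ} {a : SL2R} (h : RepGE n (m + 1) (sx * a)) :
    RepGE n m a := by
  obtain ⟨F, hF, hFa⟩ := h
  obtain ⟨a, rfl⟩ := Ideal.Quotient.mk_surjective a
  rw [sx, ← map_mul, eq_comm, mk_eq_mk_iff] at hFa
  obtain ⟨G, hG⟩ := hFa
  obtain ⟨G0, G1, h0, h1⟩ := saturation_aux _ _ _ hG
  refine ⟨_, ?_, ((mk_eq_mk_iff _ _).mpr ⟨G1, h1⟩).symm⟩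
  have hG0 : WtGE n (m + 1 + n) G0 := by
    apply WtGE.of_mul
    rw [h0]
    intro d hd
    by_cases hle : Finsupp.single 0 1 ≤ d
    · exact absurd (coeff_modMonomial_of_le _ hle) hd
    · rw [coeff_modMonomial_of_not_le _ hle] at hd
      exact hF d hd
  intro d hd
  rw [coeff_add] at hd
  by_cases hd1 : coeff d (divMonomial F (Finsupp.single 0 1)) = 0
  · rw [hd1, zero_add, coeff_X_mul'] at hd
    split_ifs at hd with h3
    · have := hG0 _ hd
      have h3' : d 3 ≠ 0 := by simpa using h3
      obtain ⟨k, hk⟩ := Nat.exists_eq_succ_of_ne_zero h3'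
      simp [wt, hk] at this ⊢
      linarith
    · exact absurd rfl hd
  · rw [coeff_divMonomial] at hd1
    have := hF _ hd1
    simp [wt] at this ⊢
    linarith

theorem RepGE.of_sx_pow_mul {n : ℕ} {a : SL2R} (k : ℕ) (h : RepGE n k (sx ^ k * a)) :
    RepGE n 0 a := by
  induction k with
  | zero => simpa using h
  | succ k ih =>
    apply ih
    apply RepGE.of_sx_mul
    rw [← mul_assoc, ← pow_succ']
    exact_mod_cast h

/-! ### Normality of `A` -/

/-- The variables `x, y, u` in `ℂ(x, y, u)`. -/
def kvar (i : Fin 3) : K3 := algebraMap P3 K3 (X i)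

theorem kvar_ne_zero (i : Fin 3) : kvar i ≠ 0 := by
  rw [kvar, Ne, map_eq_zero_iff _ (IsFractionRing.injective P3 K3)]
  exact X_ne_zero i

/-- The embedding `A → ℂ(x, y, u)`, sending `v` to `(1 + yu)/x`. -/
def toField : SL2R →ₐ[ℂ] K3 :=
  liftSL2 (kvar 0) (kvar 1) (kvar 2) ((kvar 0)⁻¹ * (1 + kvar 1 * kvar 2)) (by
    rw [mul_inv_cancel_left₀ (kvar_ne_zero 0)]; ring)

theorem toField_incl (p : P3) : toField (incl p) = algebraMap P3 K3 p := by
  have : toField.comp incl = Algebra.algHom ℂ P3 K3 := by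
    apply MvPolynomial.algHom_ext
    intro i
    fin_cases i <;> simp [toField, incl, kvar] <;> rfl
  exact DFunLike.congr_fun this p

theorem toField_sx : toField sx = kvar 0 := by simp [toField]

theorem toField_injective : Function.Injective toField := by
  rw [injective_iff_map_eq_zero]
  intro a ha
  obtain ⟨k, p, hp⟩ := exists_pow_mul a
  have h1 : algebraMap P3 K3 p = 0 := by
    rw [← toField_incl, ← hp, map_mul, ha, mul_zero]
  rw [map_eq_zero_iff _ (IsFractionRing.injective P3 K3)] at h1
  rw [h1, map_zero] at hp
  clear h1
  induction k with
  | zero => simpa using hp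
  | succ k ih =>
    apply ih
    apply sx_mul_eq_zero
    rw [← mul_assoc, ← pow_succ', hp]

instance : IsDomain SL2R := toField_injective.isDomain toField.toRingHom

/-- `ℂ(x, y, u)` as an `A`-algebra. -/
abbrev fieldAlgebra : Algebra SL2R K3 := toField.toRingHom.toAlgebra

attribute [local instance] fieldAlgebra

theorem algebraMap_eq (a : SL2R) : algebraMap SL2R K3 a = toField a := rfl

instance : FaithfulSMul SL2R K3 :=
  (faithfulSMul_iff_algebraMap_injective SL2R K3).mpr toField_injective

theorem isFractionRing_field : IsFractionRing SL2R K3 := by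
  refine IsFractionRing.of_field SL2R K3 fun z => ?_
  obtain ⟨p, q, -, rfl⟩ := IsFractionRing.div_surjective P3 z
  exact ⟨incl p, incl q, by rw [algebraMap_eq, algebraMap_eq, toField_incl, toField_incl]⟩

/-- Since `A[1/x] = ℂ[x, y, u][1/x]` is integrally closed, an element of the fraction field integral
over `A` is brought into `A` by a power of `x`. -/
theorem exists_sx_pow {f : K3} (hf : IsIntegral SL2R f) :
    ∃ (k : ℕ) (a : SL2R), toField sx ^ k * f = toField a := by
  have hM : Submonoid.powers (X 0 : P3) ≤ nonZeroDivisors P3 :=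
    powers_le_nonZeroDivisors_of_noZeroDivisors (X_ne_zero 0)
  let Q := Localization.subalgebra.ofField K3 (Submonoid.powers (X 0 : P3)) hM
  have : IsIntegrallyClosed Q :=
    isIntegrallyClosed_of_isLocalization Q (Submonoid.powers (X 0 : P3)) hM
  have hmem : ∀ a, toField a ∈ Q := by
    intro a
    obtain ⟨k, p, hp⟩ := exists_pow_mul a
    refine ⟨p, X 0 ^ k, ⟨k, rfl⟩, ?_⟩
    rw [← toField_incl, ← hp, map_mul, map_pow, map_pow, toField_sx]
    change _ = kvar 0 ^ k * toField a * (kvar 0 ^ k)⁻¹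
    field_simp [kvar_ne_zero 0]
  let g : SL2R →+* Q := toField.toRingHom.codRestrict Q hmem
  have hf' : IsIntegral Q f := by
    obtain ⟨p, hp, hpf⟩ := hf
    exact ⟨p.map g, hp.map g, by rw [Polynomial.eval₂_map]; exact hpf⟩
  obtain ⟨⟨y, hy⟩, rfl⟩ := (isIntegrallyClosed_iff K3).mp this hf'
  obtain ⟨a, s, ⟨k, rfl⟩, h⟩ := hy
  refine ⟨k, incl a, ?_⟩
  change toField sx ^ k * y = _
  rw [h, toField_incl, toField_sx, map_pow]
  change kvar 0 ^ k * (_ * (kvar 0 ^ k)⁻¹) = _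
  field_simp [kvar_ne_zero 0]

/-- `A` is normal: an element `f` integral over `A` satisfies `x ^ k f ∈ A` and, by symmetry,
`y ^ l f ∈ A`, while `x` and `y` generate the unit ideal. -/
theorem isIntegrallyClosed_SL2R : IsIntegrallyClosed SL2R := by
  have := isFractionRing_field
  rw [isIntegrallyClosed_iff K3]
  intro f hf
  let s : K3 ≃+* K3 := IsFractionRing.ringEquivOfRingEquiv swapEquiv.toRingEquiv
  have hs : ∀ a, s (toField a) = toField (swapEquiv a) := fun a =>
    IsFractionRing.ringEquivOfRingEquiv_algebraMap swapEquiv.toRingEquiv a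
  have hsf : IsIntegral SL2R (s f) := by
    obtain ⟨p, hp, hpf⟩ := hf
    refine ⟨p.map swapEquiv.toRingEquiv.toRingHom, hp.map _, ?_⟩
    rw [Polynomial.eval₂_map]
    have hcomp : (algebraMap SL2R K3).comp swapEquiv.toRingEquiv.toRingHom
        = s.toRingHom.comp (algebraMap SL2R K3) := RingHom.ext fun a => (hs a).symm
    rw [hcomp]
    have := Polynomial.hom_eval₂ p (algebraMap SL2R K3) s.toRingHom f
    rw [hpf, map_zero] at this
    exact this.symm
  obtain ⟨k, a, ha⟩ := exists_sx_pow hf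
  obtain ⟨l, b, hb⟩ := exists_sx_pow hsf
  have hb' : toField (-sy) ^ l * f = toField (swapEquiv.symm b) := by
    apply s.injective
    rw [map_mul, map_pow, hs, hs, ← swapEquiv_symm_sx, AlgEquiv.apply_symm_apply,
      AlgEquiv.apply_symm_apply, hb]
  have hcop : IsCoprime (sx ^ k) ((-sy) ^ l) :=
    IsCoprime.pow ⟨sv, su, by linear_combination sl2_rel⟩
  obtain ⟨c, d, hcd⟩ := hcop
  refine ⟨c * a + d * swapEquiv.symm b, ?_⟩
  rw [algebraMap_eq, map_add, map_mul, map_mul, ← ha, ← hb']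
  have := congrArg toField hcd
  simp only [map_add, map_mul, map_pow, map_one] at this
  linear_combination f * this

/-! ### The degeneration to Laurent series -/

/-- The degeneration `x ↦ tx, y ↦ ty, u ↦ t^{−(n+1)}u` as a homomorphism from `A` to
Laurent series in `t`. -/
def toLaurent (n : ℕ) : SL2R →ₐ[ℂ] HahnSeries ℤ K3 :=
  liftSL2 (HahnSeries.single 1 (kvar 0)) (HahnSeries.single 1 (kvar 1))
    (HahnSeries.single (-(n + 1 : ℤ)) (kvar 2))
    (HahnSeries.single (-1) (kvar 0)⁻¹ *
      (1 + HahnSeries.single 1 (kvar 1) * HahnSeries.single (-(n + 1 : ℤ)) (kvar 2))) (by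
    rw [← mul_assoc, HahnSeries.single_mul_single, mul_inv_cancel₀ (kvar_ne_zero 0)]
    simp)

section toLaurent
variable (n : ℕ)

theorem toLaurent_sx : toLaurent n sx = HahnSeries.single 1 (kvar 0) := liftSL2_sx ..
theorem toLaurent_sy : toLaurent n sy = HahnSeries.single 1 (kvar 1) := liftSL2_sy ..
theorem toLaurent_su : toLaurent n su = HahnSeries.single (-(n + 1 : ℤ)) (kvar 2) :=
  liftSL2_su ..
theorem toLaurent_sv : toLaurent n sv = HahnSeries.single (-1) (kvar 0)⁻¹ *
    (1 + HahnSeries.single 1 (kvar 1) * HahnSeries.single (-(n + 1 : ℤ)) (kvar 2)) :=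
  liftSL2_sv ..
end toLaurent

/-- The weights of `x, y, u`. -/
def wvec (n : ℕ) : Fin 3 → ℤ := ![1, 1, -(n + 1 : ℤ)]

theorem algebraMap_laurent (c : ℂ) :
    algebraMap ℂ (HahnSeries ℤ K3) c = HahnSeries.single 0 (algebraMap ℂ K3 c) := by
  rw [HahnSeries.algebraMap_apply', PowerSeries.algebraMap_apply, HahnSeries.ofPowerSeries_C,
    HahnSeries.C_apply]

theorem toLaurent_incl_monomial (n : ℕ) (d : Fin 3 →₀ ℕ) (c : ℂ) :
    toLaurent n (incl (monomial d c)) =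
      HahnSeries.single (Finsupp.weight (wvec n) d) (algebraMap P3 K3 (monomial d c)) := by
  have hm : algebraMap P3 K3 (monomial d c)
      = algebraMap ℂ K3 c * (kvar 0 ^ d 0 * kvar 1 ^ d 1 * kvar 2 ^ d 2) := by
    rw [monomial_eq, map_mul, Finsupp.prod_fintype _ _ (by simp), Fin.prod_univ_three]
    simp only [map_mul, map_pow, kvar]
    rfl
  have hw : Finsupp.weight (wvec n) d = d 0 • (1 : ℤ) + d 1 • (1 : ℤ) + d 2 • (-(n + 1 : ℤ)) := by
    rw [Finsupp.weight_apply, Finsupp.sum_fintype _ _ (by simp), Fin.sum_univ_three]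
    rfl
  have hi : incl (monomial d c) = algebraMap ℂ SL2R c * (sx ^ d 0 * sy ^ d 1 * su ^ d 2) := by
    rw [incl, aeval_monomial, Finsupp.prod_fintype _ _ (by simp), Fin.prod_univ_three]
    rfl
  rw [hi, hm, hw, map_mul, AlgHom.commutes, algebraMap_laurent]
  simp only [map_mul, map_pow, toLaurent_sx, toLaurent_sy, toLaurent_su,
    HahnSeries.single_pow, HahnSeries.single_mul_single, zero_add]

/-- The coefficients of the Laurent series of `p` are its weighted homogeneous components. -/
theorem coeff_toLaurent_incl (n : ℕ) (p : P3) (g : ℤ) :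
    (toLaurent n (incl p)).coeff g =
      algebraMap P3 K3 (weightedHomogeneousComponent (wvec n) g p) := by
  induction p using MvPolynomial.induction_on' with
  | monomial d c =>
    have : weightedHomogeneousComponent (wvec n) g (monomial d c) =
        if Finsupp.weight (wvec n) d = g then monomial d c else 0 := by
      ext e
      rw [coeff_weightedHomogeneousComponent]
      by_cases hde : d = e
      · subst hde
        split_ifs <;> simp
      · split_ifs <;> simp [hde]
    rw [toLaurent_incl_monomial, this, HahnSeries.coeff_single]
    split_ifs with h1 h2 h2
    · rfl
    · exact absurd h1.symm h2
    · exact absurd h2.symm h1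
    · simp
  | add p q hp hq => simp only [map_add, HahnSeries.coeff_add, hp, hq]

theorem RepGE.incl {n : ℕ} {m : ℤ} {p : P3}
    (h : ∀ d, coeff d p ≠ 0 → m ≤ Finsupp.weight (wvec n) d) : RepGE n m (incl p) := by
  refine ⟨rename Fin.castSucc p, ?_, ?_⟩
  · intro d hd
    obtain ⟨e, rfl, he⟩ := coeff_rename_ne_zero _ _ _ hd
    refine (h e he).trans_eq ?_
    have hinj := Fin.castSucc_injective 3
    have h0 := Finsupp.mapDomain_apply hinj e 0
    have h1 := Finsupp.mapDomain_apply hinj e 1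
    have h2 := Finsupp.mapDomain_apply hinj e 2
    have h3 : Finsupp.mapDomain Fin.castSucc e 3 = 0 := by
      apply Finsupp.mapDomain_of_notMem_range
      rintro ⟨i, hi⟩
      exact (Fin.castSucc_lt_last i).ne hi
    rw [Finsupp.weight_apply, Finsupp.sum_fintype _ _ (by simp), Fin.sum_univ_three, wt]
    change _ = (Finsupp.mapDomain Fin.castSucc e (Fin.castSucc 0) : ℤ)
      + Finsupp.mapDomain Fin.castSucc e (Fin.castSucc 1)
      - (n + 1) * (Finsupp.mapDomain Fin.castSucc e (Fin.castSucc 2)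
        + Finsupp.mapDomain Fin.castSucc e 3)
    rw [h0, h1, h2, h3]
    simp [wvec]
    ring
  · have : (Ideal.Quotient.mkₐ ℂ sl2Ideal).comp (rename Fin.castSucc) = BnNormal.incl := by
      apply MvPolynomial.algHom_ext
      intro i
      rw [AlgHom.comp_apply, rename_X, BnNormal.incl, aeval_X]
      fin_cases i <;> rfl
    exact DFunLike.congr_fun this p

/-- An element of `A` whose Laurent series has no pole is represented by a polynomial of
nonnegative weight. -/
theorem RepGE.of_orderTop {n : ℕ} {a : SL2R} (h : 0 ≤ (toLaurent n a).orderTop) :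
    RepGE n 0 a := by
  obtain ⟨k, p, hp⟩ := exists_pow_mul a
  apply RepGE.of_sx_pow_mul k
  rw [hp]
  apply RepGE.incl
  intro d hd
  by_contra! hlt
  set g := Finsupp.weight (wvec n) d with hg
  have h1 := coeff_toLaurent_incl n p g
  have hz : (toLaurent n a).coeff (g - k) = 0 := by
    apply HahnSeries.coeff_eq_zero_of_lt_orderTop
    refine lt_of_lt_of_le ?_ h
    exact_mod_cast (by omega : g - k < 0)
  rw [← hp, map_mul, map_pow, toLaurent_sx, HahnSeries.single_pow,
    HahnSeries.coeff_single_mul, nsmul_one, hz, mul_zero, eq_comm,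
    map_eq_zero_iff _ (IsFractionRing.injective P3 K3)] at h1
  apply hd
  have := congrArg (coeff d) h1
  rwa [coeff_weightedHomogeneousComponent, if_pos hg.symm, coeff_zero] at this

/-! ### `B_n` as the subring of elements without a pole -/

theorem mul_sv_mem (n i j : ℕ) (h : i + j = n + 1) : sx ^ i * sy ^ j * sv ∈ Bn n := by
  apply Algebra.subset_adjoin
  right
  exact ⟨i, by omega, by rw [← h, Nat.add_sub_cancel_left]⟩

theorem sx_mem (n : ℕ) : sx ∈ Bn n := Algebra.subset_adjoin (by simp)
theorem sy_mem (n : ℕ) : sy ∈ Bn n := Algebra.subset_adjoin (by simp)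

/-- `B_n` also contains all `x ^ i y ^ j u` with `i + j = n + 1`, because `yu = xv − 1`. -/
theorem mul_su_mem (n i j : ℕ) (h : i + j = n + 1) : sx ^ i * sy ^ j * su ∈ Bn n := by
  cases j with
  | zero =>
    obtain rfl : i = n + 1 := by omega
    rw [pow_zero, mul_one]
    exact Algebra.subset_adjoin (by simp)
  | succ j =>
    have : sx ^ i * sy ^ (j + 1) * su = sx ^ (i + 1) * sy ^ j * sv - sx ^ i * sy ^ j := by
      linear_combination -sx ^ i * sy ^ j * sl2_rel
    rw [this]
    exact sub_mem (mul_sv_mem n (i + 1) j (by omega))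
      (mul_mem (pow_mem (sx_mem n) _) (pow_mem (sy_mem n) _))

theorem monomial_mem (n c d : ℕ) : ∀ a b : ℕ, (n + 1) * (c + d) ≤ a + b →
    sx ^ a * sy ^ b * su ^ c * sv ^ d ∈ Bn n := by
  -- A factor `x ^ i y ^ j` of degree `n + 1` is split off for each factor `u` or `v`.
  have split : ∀ a b : ℕ, n + 1 ≤ a + b → ∃ i j a' b', a = i + a' ∧ b = j + b' ∧ i + j = n + 1 := by
    intro a b h
    exact ⟨min a (n + 1), n + 1 - min a (n + 1), a - min a (n + 1), b - (n + 1 - min a (n + 1)),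
      by omega, by omega, by omega⟩
  induction c with
  | zero =>
    induction d with
    | zero =>
      intro a b _
      simpa using mul_mem (pow_mem (sx_mem n) a) (pow_mem (sy_mem n) b)
    | succ d ih =>
      intro a b h
      have h' : (n + 1) * (0 + d) + (n + 1) ≤ a + b := by linarith
      obtain ⟨i, j, a', b', rfl, rfl, hij⟩ := split a b (by omega)
      convert mul_mem (mul_sv_mem n i j hij) (ih a' b' (by omega)) using 1
      ring
  | succ c ih =>
    intro a b h
    have h' : (n + 1) * (c + d) + (n + 1) ≤ a + b := by linarith
    obtain ⟨i, j, a', b', rfl, rfl, hij⟩ := split a b (by omega)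
    convert mul_mem (mul_su_mem n i j hij) (ih a' b' (by omega)) using 1
    ring

theorem RepGE.mem {n : ℕ} {a : SL2R} (h : RepGE n 0 a) : a ∈ Bn n := by
  obtain ⟨F, hF, rfl⟩ := h
  rw [F.as_sum, map_sum]
  refine sum_mem fun d hd => ?_
  have hd' := hF d (mem_support_iff.mp hd)
  have : Ideal.Quotient.mk sl2Ideal (monomial d (coeff d F)) =
      algebraMap ℂ SL2R (coeff d F) * (sx ^ d 0 * sy ^ d 1 * su ^ d 2 * sv ^ d 3) := by
    rw [monomial_eq, map_mul, Finsupp.prod_fintype _ _ (by simp), Fin.prod_univ_four]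
    simp only [map_mul, map_pow]
    rfl
  rw [this]
  refine mul_mem (algebraMap_mem _ _) (monomial_mem n _ _ _ _ ?_)
  rw [wt] at hd'
  zify
  linarith

/-- The Laurent series of an element of `B_n` has no pole, since this holds for the generators. -/
theorem orderTop_nonneg_of_mem {n : ℕ} {a : SL2R} (h : a ∈ Bn n) :
    0 ≤ HahnSeries.addVal ℤ K3 (toLaurent n a) := by
  have hsingle : ∀ (m : ℤ) (r : K3), 0 ≤ m →
      0 ≤ HahnSeries.addVal ℤ K3 (HahnSeries.single m r) := by
    intro m r hm
    rw [HahnSeries.addVal_apply]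
    exact le_trans (by exact_mod_cast hm) HahnSeries.orderTop_single_le
  have hadd : ∀ f g, 0 ≤ HahnSeries.addVal ℤ K3 f → 0 ≤ HahnSeries.addVal ℤ K3 g →
      0 ≤ HahnSeries.addVal ℤ K3 (f + g) := fun f g hf hg =>
    (le_min hf hg).trans ((HahnSeries.addVal ℤ K3).map_add f g)
  induction h using Algebra.adjoin_induction with
  | mem w hw =>
    rcases hw with (rfl | rfl | rfl) | ⟨i, hi, rfl⟩
    · rw [toLaurent_sx]
      exact hsingle 1 _ (by norm_num)
    · rw [toLaurent_sy]
      exact hsingle 1 _ (by norm_num)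
    · simp only [map_mul (toLaurent n), map_pow (toLaurent n), toLaurent_sx, toLaurent_su,
        HahnSeries.single_pow, HahnSeries.single_mul_single]
      apply hsingle
      simp
    · obtain ⟨j, hj⟩ := Nat.exists_eq_add_of_le hi
      rw [hj, Nat.add_sub_cancel_left]
      simp only [map_mul (toLaurent n), map_pow (toLaurent n), toLaurent_sx, toLaurent_sy,
        toLaurent_sv, HahnSeries.single_pow, mul_add, mul_one, HahnSeries.single_mul_single]
      have hj' : (n : ℤ) + 1 = i + j := by exact_mod_cast hj
      apply hadd <;> apply hsingle <;> simp <;> omega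
  | algebraMap r =>
    rw [AlgHom.commutes, algebraMap_laurent]
    exact hsingle 0 _ le_rfl
  | add f g _ _ hf hg => rw [map_add]; exact hadd _ _ hf hg
  | mul f g _ _ hf hg =>
    rw [map_mul, AddValuation.map_mul]
    exact add_nonneg hf hg

/-- An element of `A` has a Laurent series without a pole exactly when it lies in `B_n`, and the
Laurent series without a pole form a valuation ring, which is integrally closed. -/
theorem isIntegrallyClosedIn_Bn (n : ℕ) : IsIntegrallyClosedIn (Bn n) SL2R := by
  rw [isIntegrallyClosedIn_iff]
  refine ⟨Subtype.val_injective, fun {a} ha => ?_⟩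
  let v := AddValuation.toValuation (HahnSeries.addVal ℤ K3)
  let g : Bn n →+* v.integer :=
    ((toLaurent n).toRingHom.comp (Bn n).val.toRingHom).codRestrict v.integer
      fun b => orderTop_nonneg_of_mem b.2
  have hint : IsIntegral v.integer (toLaurent n a) := by
    obtain ⟨p, hp, hpa⟩ := ha
    refine ⟨p.map g, hp.map g, ?_⟩
    rw [Polynomial.eval₂_map]
    have := Polynomial.hom_eval₂ p (algebraMap (Bn n) SL2R) (toLaurent n).toRingHom a
    rw [hpa, map_zero] at this
    exact this.symm
  have hv : 0 ≤ HahnSeries.addVal ℤ K3 (toLaurent n a) :=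
    (Valuation.integer.integers v).mem_of_integral hint
  rw [HahnSeries.addVal_apply] at hv
  exact ⟨⟨a, (RepGE.of_orderTop hv).mem⟩, rfl⟩

end BnNormal

/-- For `n ≥ 1`, the ring `B_n` is an integral domain which is integrally
closed in its field of fractions; i.e. the affine variety `P̂_n = Spec(B_n)` is normal. -/
theorem stmt11 (n : ℕ) (hn : 1 ≤ n) :
    IsDomain (Bn n) ∧ IsIntegrallyClosed (Bn n) := by
  have := BnNormal.isIntegrallyClosed_SL2R
  have := BnNormal.isIntegrallyClosedIn_Bn n
  exact ⟨inferInstance,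
    .of_isIntegrallyClosed_of_isIntegrallyClosedIn (Bn n) SL2R⟩

end
end
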